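/- arXiv:2308.16731 — 2 statements merged into one kernel-verified Lean document; each statement's English description precedes it below -/
import Mathlib

section
/- (Surjectivity of the moment map; Proposition A.7.) Let D ≥ 1, d ≥ 1, L ≥ 1, and let (μ_i^{(l)})_{1≤i≤D, 1≤l≤L} be a tuple in the feasible set F_L. Then there exist finite positive Borel measures ν_i^{(l)} on ℝ, each with ν_i^{(l)}(ℝ ∖ [-1,1]) = 0, such that the measure ν = Σ_{l=1}^L ν_1^{(l)} ⊗ ⋯ ⊗ ν_D^{(l)} on ℝ^D has total mass ν([-1,1]^D) = 1 and satisfies ∫ x_1^{n_1} ⋯ x_D^{n_D} dν(x) = Σ_{l=1}^L ∏_{i=1}^D μ_{i,n_i}^{(l)} for every multi-index n ∈ ℕ^D with 0 ≤ n_i ≤ d for all i. -/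
open MeasureTheory

/-- The degree-`d` moment matrix `𝓜_d(μ)` with entries `μ (m+n)`. -/
noncomputable def momentMatrix (d : ℕ) (μ : ℕ → ℝ) : Matrix (Fin (d+1)) (Fin (d+1)) ℝ :=
  fun m n => μ (m.1 + n.1)

/-- The localized moment matrix `𝓜_{d-1}(μ; 1 - x²)` with entries `μ (m+n) - μ (m+n+2)`. -/
noncomputable def locMomentMatrix (d : ℕ) (μ : ℕ → ℝ) : Matrix (Fin d) (Fin d) ℝ :=
  fun m n => μ (m.1 + n.1) - μ (m.1 + n.1 + 2)

/-- The feasible set `F_L`: all the moment matrices `𝓜_d(μ_i^{(l)})` and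
`𝓜_{d-1}(μ_i^{(l)}; 1-x²)` are PSD and `Σ_l ∏_i μ_{i,0}^{(l)} = 1`. -/
def Feasible (D d L : ℕ) (μ : Fin L → Fin D → ℕ → ℝ) : Prop :=
  (∀ l i, (momentMatrix d (μ l i)).PosSemidef) ∧
  (∀ l i, (locMomentMatrix d (μ l i)).PosSemidef) ∧
  (∑ l, ∏ i, μ l i 0) = 1

/-- The hypercube `[-1,1]^D` in `ℝ^D`. -/
def cube (D : ℕ) : Set (Fin D → ℝ) := Set.univ.pi fun _ => Set.Icc (-1) 1

/-!
Factor the moment matrix as a Gram matrix of vectors `v₀, …, v_d`. Since `⟪vₘ, vₙ⟫` depends only on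
`m + n`, the shift `vₘ ↦ vₘ₊₁` is symmetric on `W = span (v₀, …, v_{d-1})`, and positivity of the
localized matrix says exactly that it does not increase norms. Its compression `A` to `W` is
therefore a symmetric contraction, with `⟪Aᵏ v₀, v₀⟫ = μₖ` for all `k < 2d`, so that the spectral
measure of `A` at `v₀` is a measure on `[-1, 1]` with the prescribed moments. Tensor products of
these one-dimensional measures solve the multivariate problem.
-/

open Matrix Module.End
open scoped ComplexOrder InnerProductSpace

section SpectralMeasure

variable {𝕜 E : Type*} [RCLike 𝕜] [NormedAddCommGroup E] [InnerProductSpace 𝕜 E]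
  [FiniteDimensional 𝕜 E] {A : E →ₗ[𝕜] E}

/-- The spectral measure of a symmetric operator `A` at a vector `w`: the sum of the Dirac masses at
the eigenvalues of `A`, weighted by the squared norms of the coordinates of `w` in an orthonormal
eigenbasis. -/
noncomputable def spectralMeasure (hA : A.IsSymmetric) (w : E) : Measure ℝ :=
  ∑ j, ENNReal.ofReal (‖⟪hA.eigenvectorBasis rfl j, w⟫_𝕜‖ ^ 2) •
    Measure.dirac (hA.eigenvalues rfl j)

instance isFiniteMeasure_spectralMeasure (hA : A.IsSymmetric) (w : E) :
    IsFiniteMeasure (spectralMeasure hA w) := by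
  have (j : Fin (Module.finrank 𝕜 E)) : IsFiniteMeasure
      (ENNReal.ofReal (‖⟪hA.eigenvectorBasis rfl j, w⟫_𝕜‖ ^ 2) •
        Measure.dirac (hA.eigenvalues rfl j)) :=
    Measure.smul_finite _ ENNReal.ofReal_ne_top
  unfold spectralMeasure
  infer_instance

theorem spectralMeasure_compl_eq_zero (hA : A.IsSymmetric) (w : E) {s : Set ℝ}
    (hs : ∀ x : ℝ, HasEigenvalue A (x : 𝕜) → x ∈ s) : spectralMeasure hA w sᶜ = 0 := by
  have hmem (j) : hA.eigenvalues rfl j ∈ s := hs _ (hA.hasEigenvalue_eigenvalues rfl j)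
  simp [spectralMeasure, hmem]

theorem inner_pow_apply_self_eq_sum (hA : A.IsSymmetric) (w : E) (k : ℕ) :
    ⟪(A ^ k) w, w⟫_𝕜 = ∑ j, (hA.eigenvalues rfl j : 𝕜) ^ k *
      (‖⟪hA.eigenvectorBasis rfl j, w⟫_𝕜‖ : 𝕜) ^ 2 := by
  rw [← (hA.eigenvectorBasis rfl).sum_inner_mul_inner]
  refine Finset.sum_congr rfl fun j _ => ?_
  rw [hA.pow k, (hA.hasEigenvector_eigenvectorBasis rfl j).pow_apply, inner_smul_right, mul_assoc,
    ← inner_conj_symm w, RCLike.conj_mul]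

theorem integral_pow_spectralMeasure (hA : A.IsSymmetric) (w : E) (k : ℕ) :
    ∫ x, x ^ k ∂spectralMeasure hA w = RCLike.re ⟪(A ^ k) w, w⟫_𝕜 := by
  rw [spectralMeasure, integral_finsetSum_measure fun j _ =>
    (integrable_dirac (by simp)).smul_measure ENNReal.ofReal_ne_top]
  simp only [integral_smul_measure, integral_dirac, ENNReal.toReal_ofReal (sq_nonneg _),
    smul_eq_mul, inner_pow_apply_self_eq_sum hA, ← RCLike.ofReal_pow, ← RCLike.ofReal_mul,
    ← RCLike.ofReal_sum, RCLike.ofReal_re]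
  exact Finset.sum_congr rfl fun j _ => mul_comm _ _

end SpectralMeasure

theorem norm_le_one_of_hasEigenvalue {𝕜 E : Type*} [NormedField 𝕜] [NormedAddCommGroup E]
    [NormedSpace 𝕜 E] {A : E →ₗ[𝕜] E} (hA : ∀ x, ‖A x‖ ≤ ‖x‖) {c : 𝕜}
    (hc : HasEigenvalue A c) : ‖c‖ ≤ 1 := by
  obtain ⟨x, hx⟩ := hc.exists_hasEigenvector
  have hcx : ‖c‖ * ‖x‖ ≤ ‖x‖ := by simpa only [hx.apply_eq_smul, norm_smul] using hA x
  exact (mul_le_iff_le_one_left (norm_pos_iff.mpr hx.2)).mp hcx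

theorem exists_linearMap_range_of_norm_le {R V E E' : Type*} [Ring R] [AddCommGroup V] [Module R V]
    [SeminormedAddCommGroup E] [Module R E] [NormedAddCommGroup E'] [Module R E']
    (F : V →ₗ[R] E) (S : V →ₗ[R] E') (hle : ∀ x, ‖S x‖ ≤ ‖F x‖) :
    ∃ T : F.range →ₗ[R] E', (∀ x, T (F.rangeRestrict x) = S x) ∧ ∀ y, ‖T y‖ ≤ ‖y‖ := by
  have hker : F.ker ≤ S.ker := fun x hx => by
    simpa [LinearMap.mem_ker.mp hx] using hle x
  let T := F.ker.liftQ S hker ∘ₗ F.quotKerEquivRange.symm.toLinearMap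
  have hT (x : V) : T (F.rangeRestrict x) = S x :=
    congrArg (F.ker.liftQ S hker) (F.quotKerEquivRange_symm_apply_image x _)
  refine ⟨T, hT, fun y => ?_⟩
  obtain ⟨x, rfl⟩ := F.surjective_rangeRestrict y
  exact (hT x).symm ▸ hle x

section Gram

variable {𝕜 E ι : Type*} [RCLike 𝕜] [NormedAddCommGroup E] [InnerProductSpace 𝕜 E]

theorem exists_isSymmetric_compression {V : Type*} [AddCommGroup V] [Module 𝕜 V]
    (F S : V →ₗ[𝕜] E) [F.range.HasOrthogonalProjection] (hle : ∀ x, ‖S x‖ ≤ ‖F x‖)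
    (hsymm : ∀ x y, ⟪S x, F y⟫_𝕜 = ⟪F x, S y⟫_𝕜) :
    ∃ A : E →ₗ[𝕜] E, A.IsSymmetric ∧ (∀ y, ‖A y‖ ≤ ‖y‖) ∧
      ∀ x, A (F x) = F.range.starProjection (S x) := by
  obtain ⟨T, hT, hT1⟩ := exists_linearMap_range_of_norm_le F S hle
  have hTsymm (y z : F.range) : ⟪T y, z⟫_𝕜 = ⟪(y : E), T z⟫_𝕜 := by
    obtain ⟨x, rfl⟩ := F.surjective_rangeRestrict y
    obtain ⟨x', rfl⟩ := F.surjective_rangeRestrict z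
    rw [hT, hT]
    exact hsymm x x'
  let P := F.range.orthogonalProjectionOnto
  refine ⟨F.range.starProjection.toLinearMap ∘ₗ T ∘ₗ P.toLinearMap, fun y z => ?_, fun y => ?_,
    fun x => ?_⟩
  · calc ⟪F.range.starProjection (T (P y)), z⟫_𝕜
        = ⟪T (P y), P z⟫_𝕜 := Submodule.inner_starProjection_left_eq_right _ _ _
      _ = ⟪(P y : E), T (P z)⟫_𝕜 := hTsymm _ _
      _ = ⟪y, F.range.starProjection (T (P z))⟫_𝕜 :=
        Submodule.inner_starProjection_left_eq_right _ _ _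
  · calc ‖F.range.starProjection (T (P y))‖
        ≤ ‖T (P y)‖ := F.range.norm_starProjection_apply_le _
      _ ≤ ‖P y‖ := hT1 _
      _ ≤ ‖y‖ := F.range.norm_orthogonalProjectionOnto_apply_le y
  · have hP : P (F x) = F.rangeRestrict x :=
      F.range.orthogonalProjectionOnto_mem_subspace_eq_self (F.rangeRestrict x)
    simp only [LinearMap.comp_apply, ContinuousLinearMap.coe_coe, hP, hT]

open scoped MatrixOrder Matrix.Norms.L2Operator in
theorem exists_eq_gram_of_posSemidef [Fintype ι] {M : Matrix ι ι 𝕜} (hM : M.PosSemidef) :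
    ∃ v : ι → EuclideanSpace 𝕜 ι, M = gram 𝕜 v := by
  classical
  obtain ⟨B, rfl⟩ := CStarAlgebra.nonneg_iff_eq_star_mul_self.mp hM.nonneg
  refine ⟨fun j => WithLp.toLp 2 (B.col j), ?_⟩
  rw [gram_eq_conjTranspose_mul (EuclideanSpace.basisFun ι 𝕜)]
  rfl

theorem norm_sum_smul_le_of_posSemidef_gram_sub [Fintype ι] {u v : ι → E}
    (h : (gram 𝕜 u - gram 𝕜 v).PosSemidef) (c : ι → 𝕜) :
    ‖∑ i, c i • v i‖ ≤ ‖∑ i, c i • u i‖ := by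
  have hnonneg := h.re_dotProduct_nonneg c
  rw [sub_mulVec, dotProduct_sub, star_dotProduct_gram_mulVec, star_dotProduct_gram_mulVec, map_sub,
    inner_self_eq_norm_sq, inner_self_eq_norm_sq, sub_nonneg] at hnonneg
  exact le_of_sq_le_sq hnonneg (norm_nonneg _)

theorem exists_isSymmetric_compression_of_gram [Finite ι] {u v : ι → E}
    [(Submodule.span 𝕜 (Set.range u)).HasOrthogonalProjection]
    (hle : (gram 𝕜 u - gram 𝕜 v).PosSemidef) (hsymm : ∀ i j, ⟪v i, u j⟫_𝕜 = ⟪u i, v j⟫_𝕜) :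
    ∃ A : E →ₗ[𝕜] E, A.IsSymmetric ∧ (∀ y, ‖A y‖ ≤ ‖y‖) ∧
      ∀ i, A (u i) = (Submodule.span 𝕜 (Set.range u)).starProjection (v i) := by
  classical
  cases nonempty_fintype ι
  obtain ⟨A, hA, hA1, hAF⟩ := exists_isSymmetric_compression
    (Fintype.linearCombination 𝕜 u) (Fintype.linearCombination 𝕜 v)
    (by simpa only [Fintype.linearCombination_apply]
      using norm_sum_smul_le_of_posSemidef_gram_sub hle)
    (fun c c' => by
      simp only [Fintype.linearCombination_apply, sum_inner, inner_sum, inner_smul_left,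
        inner_smul_right, hsymm])
  refine ⟨A, hA, hA1, fun i => ?_⟩
  simpa [Fintype.range_linearCombination] using hAF (Pi.single i 1)

end Gram

section Shift

theorem pow_apply_zero_of_shift {R M : Type*} [Semiring R] [AddCommMonoid M] [Module R M]
    {A : M →ₗ[R] M} {n : ℕ} {w : Fin (n + 1) → M} (hA : ∀ i : Fin n, A (w i.castSucc) = w i.succ)
    (i : Fin (n + 1)) : (A ^ (i : ℕ)) (w 0) = w i := by
  induction i using Fin.induction with
  | zero => simp
  | succ i ih => rw [Fin.val_succ, pow_succ', Module.End.mul_apply, ← Fin.val_castSucc, ih, hA]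

variable {𝕜 E : Type*} [RCLike 𝕜] [NormedAddCommGroup E] [InnerProductSpace 𝕜 E]

theorem inner_pow_apply_eq_of_compression {A : E →ₗ[𝕜] E} (hA : A.IsSymmetric) {n : ℕ}
    {W : Submodule 𝕜 E} [W.HasOrthogonalProjection] {v : Fin (n + 2) → E} {μ : ℕ → 𝕜}
    (hv : ∀ i j, ⟪v i, v j⟫_𝕜 = μ (i + j)) (hW : ∀ i : Fin (n + 1), v i.castSucc ∈ W)
    (hAv : ∀ i : Fin (n + 1), A (v i.castSucc) = W.starProjection (v i.succ))
    {k : ℕ} (hk : k < 2 * (n + 1)) : ⟪(A ^ k) (v 0), v 0⟫_𝕜 = μ k := by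
  have hpow (i : Fin (n + 1)) : (A ^ (i : ℕ)) (v 0) = v i.castSucc := by
    refine pow_apply_zero_of_shift (w := fun i : Fin (n + 1) => v i.castSucc) (fun j => ?_) i
    rw [hAv, Fin.succ_castSucc, Submodule.starProjection_eq_self_iff.mpr (hW j.succ)]
  -- Moving `Aⁱ` to the other side leaves a single projection, which is absorbed by `v i ∈ W`.
  have hinner (i j : Fin (n + 1)) : ⟪(A ^ (i + (j + 1) : ℕ)) (v 0), v 0⟫_𝕜 = μ (i + (j + 1)) := by
    rw [pow_add, Module.End.mul_apply, hA.pow, hpow, pow_succ', Module.End.mul_apply, hpow, hAv,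
      Submodule.inner_starProjection_left_eq_right,
      Submodule.starProjection_eq_self_iff.mpr (hW i), hv, Fin.val_succ, Fin.val_castSucc, add_comm]
  rcases k with _ | k
  · simpa using hv 0 0
  · obtain ⟨i, j, hij⟩ : ∃ i j : Fin (n + 1), (i + j : ℕ) = k :=
      ⟨⟨min k n, by lia⟩, ⟨k - n, by lia⟩, by grind⟩
    simpa only [← hij, add_assoc] using hinner i j

end Shift

theorem exists_finiteMeasure_integral_pow_eq {d : ℕ} {μ : ℕ → ℝ}
    (hM : (momentMatrix d μ).PosSemidef) (hL : (locMomentMatrix d μ).PosSemidef) :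
    ∃ ν : FiniteMeasure ℝ, (ν : Measure ℝ) (Set.Icc (-1 : ℝ) 1)ᶜ = 0 ∧
      ∀ k < 2 * d, ∫ x, x ^ k ∂(ν : Measure ℝ) = μ k := by
  obtain _ | n := d
  · exact ⟨0, by simp, by simp⟩
  obtain ⟨v, hMv⟩ := exists_eq_gram_of_posSemidef hM
  have hv (i j) : ⟪v i, v j⟫_ℝ = μ (i + j) := congrFun₂ hMv.symm i j
  have hLv : locMomentMatrix (n + 1) μ =
      gram ℝ (fun i : Fin (n + 1) => v i.castSucc) - gram ℝ (fun i => v i.succ) := by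
    ext i j
    simp only [locMomentMatrix, Matrix.sub_apply, gram_apply, hv, Fin.val_castSucc, Fin.val_succ]
    ring_nf
  obtain ⟨A, hA, hA1, hAv⟩ := exists_isSymmetric_compression_of_gram (hLv ▸ hL) fun i j => by
    simp only [hv, Fin.val_castSucc, Fin.val_succ]
    ring_nf
  refine ⟨⟨spectralMeasure hA (v 0), inferInstance⟩,
    spectralMeasure_compl_eq_zero hA (v 0) fun x hx =>
      abs_le.mp (norm_le_one_of_hasEigenvalue hA1 hx), fun k hk => ?_⟩
  exact (integral_pow_spectralMeasure hA (v 0) k).trans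
    (inner_pow_apply_eq_of_compression hA hv
      (fun i => Submodule.subset_span (Set.mem_range_self i)) hAv hk)

theorem integrable_of_continuousOn_of_measure_compl_eq_zero {X E : Type*} [TopologicalSpace X]
    [T2Space X] [MeasurableSpace X] [OpensMeasurableSpace X] [NormedAddCommGroup E]
    {μ : Measure X} [IsFiniteMeasureOnCompacts μ] {K : Set X} (hK : IsCompact K) (hμ : μ Kᶜ = 0)
    {f : X → E} (hf : ContinuousOn f K) : Integrable f μ := by
  rw [← Measure.restrict_eq_self_of_ae_mem (mem_ae_iff.mpr hμ)]
  exact hf.integrableOn_compact hK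

theorem integral_prod_sum_pi {𝕜 ι κ : Type*} [RCLike 𝕜] [Fintype ι] [Fintype κ] {X : ι → Type*}
    [∀ i, MeasurableSpace (X i)] (ν : κ → ∀ i, Measure (X i)) [∀ l i, SigmaFinite (ν l i)]
    {f : ∀ i, X i → 𝕜} (hf : ∀ l i, Integrable (f i) (ν l i)) :
    ∫ x, ∏ i, f i (x i) ∂(∑ l, Measure.pi (ν l)) = ∑ l, ∏ i, ∫ x, f i x ∂ν l i := by
  rw [integral_finsetSum_measure fun l _ => Integrable.fintype_prod_dep (hf l)]
  simp only [integral_fintype_prod_eq_prod]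

theorem sum_pi_univ_pi_eq_univ {ι κ : Type*} [Fintype ι] [Fintype κ] {X : ι → Type*}
    [∀ i, MeasurableSpace (X i)] (ν : κ → ∀ i, Measure (X i)) [∀ l i, SigmaFinite (ν l i)]
    {K : ∀ i, Set (X i)} (hν : ∀ l i, ν l i (K i)ᶜ = 0) :
    (∑ l, Measure.pi (ν l)) (Set.univ.pi K) = (∑ l, Measure.pi (ν l)) Set.univ := by
  simp only [Measure.coe_finsetSum, Finset.sum_apply, Measure.pi_pi, Measure.pi_univ,
    measure_of_measure_compl_eq_zero (hν _ _)]

theorem statement4_general {ι κ : Type*} [Fintype ι] [Fintype κ] {d : ℕ} (hd : 1 ≤ d)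
    {μ : κ → ι → ℕ → ℝ} (hM : ∀ l i, (momentMatrix d (μ l i)).PosSemidef)
    (hL : ∀ l i, (locMomentMatrix d (μ l i)).PosSemidef) :
    ∃ ν : κ → ι → FiniteMeasure ℝ,
      (∀ l i, (ν l i : Measure ℝ) (Set.Icc (-1 : ℝ) 1)ᶜ = 0) ∧
      (∑ l, Measure.pi fun i => (ν l i : Measure ℝ)) (Set.univ.pi fun _ => Set.Icc (-1) 1) =
        ENNReal.ofReal (∑ l, ∏ i, μ l i 0) ∧
      ∀ n : ι → ℕ, (∀ i, n i < 2 * d) →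
        ∫ x, (∏ i, x i ^ n i) ∂(∑ l, Measure.pi fun i => (ν l i : Measure ℝ)) =
          ∑ l, ∏ i, μ l i (n i) := by
  choose ν hν hmom using fun l i => exists_finiteMeasure_integral_pow_eq (hM l i) (hL l i)
  have hmoments (n : ι → ℕ) (hn : ∀ i, n i < 2 * d) :
      ∫ x, (∏ i, x i ^ n i) ∂(∑ l, Measure.pi fun i => (ν l i : Measure ℝ)) =
        ∑ l, ∏ i, μ l i (n i) := by
    rw [integral_prod_sum_pi (fun l i => (ν l i : Measure ℝ)) (f := fun i x => x ^ n i) fun l i =>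
      integrable_of_continuousOn_of_measure_compl_eq_zero isCompact_Icc (hν l i) (by fun_prop)]
    exact Finset.sum_congr rfl fun l _ => Finset.prod_congr rfl fun i _ => hmom l i (n i) (hn i)
  refine ⟨ν, hν, ?_, hmoments⟩
  rw [sum_pi_univ_pi_eq_univ _ hν, ← hmoments (fun _ => 0) fun _ => by lia]
  simp

/-- Proposition A.7 (surjectivity of the moment map): every feasible tuple of moments in
`F_L` is realized by a sum of `L` product measures with factors supported in `[-1,1]`,
of total mass `1` on `[-1,1]^D`. -/
theorem statement4 (D d L : ℕ) (hD : 1 ≤ D) (hd : 1 ≤ d) (hL : 1 ≤ L)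
    (μ : Fin L → Fin D → ℕ → ℝ) (hμ : Feasible D d L μ) :
    ∃ ν : Fin L → Fin D → FiniteMeasure ℝ,
      (∀ l i, (ν l i : Measure ℝ) (Set.Icc (-1 : ℝ) 1)ᶜ = 0) ∧
      (∑ l, Measure.pi fun i => (ν l i : Measure ℝ)) (cube D) = 1 ∧
      ∀ n : Fin D → ℕ, (∀ i, n i ≤ d) →
        ∫ x, (∏ i, x i ^ n i) ∂(∑ l, Measure.pi fun i => (ν l i : Measure ℝ)) =
          ∑ l, ∏ i, μ l i (n i) := by
  obtain ⟨hM, hLoc, hsum⟩ := hμ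
  obtain ⟨ν, hν, hmass, hmom⟩ := statement4_general hd hM hLoc
  exact ⟨ν, hν, by rw [cube, hmass, hsum, ENNReal.ofReal_one], fun n hn =>
    hmom n fun i => (hn i).trans_lt (by lia)⟩
end

section
/- (Corollary A.8, point 2: global-minimum correspondence between the measure problem and the moment problem.) Let p be a real polynomial in D variables of total degree at most d, L ≥ 1, and let ν = Σ_{l=1}^L ν_1^{(l)} ⊗ ⋯ ⊗ ν_D^{(l)} ∈ S_L, where each ν_i^{(l)} is a finite positive Borel measure on ℝ with ν_i^{(l)}(ℝ ∖ [-1,1]) = 0 and ν([-1,1]^D) = 1. Define the moments μ_{i,k}^{(l)} = ∫ x^k dν_i^{(l)}(x) for 0 ≤ k ≤ 2d. Then ∫ p dν attains the infimum of ∫ p dρ over ρ ∈ S_L if and only if the tuple (μ_i^{(l)}) attains the infimum of the objective f(μ) = Σ_{|n|≤d} p_n Σ_{l=1}^L ∏_{i=1}^D μ_{i,n_i}^{(l)} over the feasible set F_L. -/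
open MeasureTheory

/-- The reformulated objective `f(μ) = Σ_n p_n Σ_l ∏_i μ_{i,n_i}^{(l)}`. -/
noncomputable def objective (D L : ℕ) (p : MvPolynomial (Fin D) ℝ)
    (μ : Fin L → Fin D → ℕ → ℝ) : ℝ :=
  ∑ n ∈ p.support, p.coeff n * ∑ l, ∏ i, μ l i (n i)

/-!
By Fubini, `∫ p dν` is the objective evaluated at the moments of the factors of `ν`, so the two
minimisation problems agree once `F_L` is known to consist of the moment tuples, up to degree `2d`,
of the elements of `S_L`. This is the truncated Hausdorff moment problem, factor by factor. Positive
semidefiniteness of the two matrices says that the linear functional `X ^ k ↦ μ_k` is nonnegative on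
`g ^ 2` and `(1 - X ^ 2) * g ^ 2`, which integration against a measure on `[-1, 1]` certainly is.
Conversely, by Markov–Lukács such a functional is nonnegative on all polynomials of degree at most
`2d` that are nonnegative on `[-1, 1]`; M. Riesz extension makes it a positive functional on
continuous functions, and Riesz–Markov–Kakutani makes that a measure.
-/

open Polynomial

/-- The degree-`n` truncation of the preordering of `[a, b]`: sums of products
`(X - a) ^ i * (b - X) ^ j * g ^ 2` of formal degree at most `n`. Powers beyond `i, j ≤ 1` are
allowed to make closure under multiplication immediate. -/
noncomputable def truncatedPreordering (a b : ℝ) (n : ℕ) : AddSubmonoid ℝ[X] :=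
  AddSubmonoid.closure {q | ∃ (i j : ℕ) (g : ℝ[X]), i + j + 2 * g.natDegree ≤ n ∧
    q = (X - C a) ^ i * (C b - X) ^ j * g ^ 2}

section Preordering

variable {a b : ℝ} {m n : ℕ}

theorem weighted_sq_mem_truncatedPreordering {i j : ℕ} {g : ℝ[X]}
    (h : i + j + 2 * g.natDegree ≤ n) :
    (X - C a) ^ i * (C b - X) ^ j * g ^ 2 ∈ truncatedPreordering a b n :=
  AddSubmonoid.subset_closure ⟨i, j, g, h, rfl⟩

theorem sq_mem_truncatedPreordering {g : ℝ[X]} (h : 2 * g.natDegree ≤ n) :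
    g ^ 2 ∈ truncatedPreordering a b n := by
  simpa using weighted_sq_mem_truncatedPreordering (a := a) (b := b) (i := 0) (j := 0) (by omega)

theorem C_mem_truncatedPreordering {c : ℝ} (hc : 0 ≤ c) : C c ∈ truncatedPreordering a b n := by
  rw [← Real.sq_sqrt hc, C_pow]
  exact sq_mem_truncatedPreordering (by simp)

theorem X_sub_C_mem_truncatedPreordering : X - C a ∈ truncatedPreordering a b 1 := by
  simpa using weighted_sq_mem_truncatedPreordering (a := a) (b := b) (i := 1) (j := 0) (g := 1)
    (by simp)

theorem C_sub_X_mem_truncatedPreordering : C b - X ∈ truncatedPreordering a b 1 := by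
  simpa using weighted_sq_mem_truncatedPreordering (a := a) (b := b) (i := 0) (j := 1) (g := 1)
    (by simp)

open scoped Pointwise in
theorem mul_mem_truncatedPreordering {p q : ℝ[X]} (hp : p ∈ truncatedPreordering a b m)
    (hq : q ∈ truncatedPreordering a b n) : p * q ∈ truncatedPreordering a b (m + n) := by
  have hpq := AddSubmonoid.mul_mem_mul hp hq
  rw [truncatedPreordering, truncatedPreordering, AddSubmonoid.closure_mul_closure] at hpq
  refine AddSubmonoid.closure_mono ?_ hpq
  rintro _ ⟨_, ⟨i, j, g, hg, rfl⟩, _, ⟨k, l, h, hh, rfl⟩, rfl⟩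
  have hgh := natDegree_mul_le (p := g) (q := h)
  exact ⟨i + k, j + l, g * h, by omega, by ring⟩

theorem eval_nonneg_of_mem_truncatedPreordering {q : ℝ[X]} (hq : q ∈ truncatedPreordering a b n)
    {x : ℝ} (hx : x ∈ Set.Icc a b) : 0 ≤ q.eval x := by
  induction hq using AddSubmonoid.closure_induction with
  | mem q hq =>
    obtain ⟨i, j, g, -, rfl⟩ := hq
    simp only [eval_mul, eval_pow, eval_sub, eval_X, eval_C]
    have hxa := sub_nonneg.2 hx.1
    have hxb := sub_nonneg.2 hx.2
    positivity
  | zero => simp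
  | add p q _ _ hp hq => rw [eval_add]; exact add_nonneg hp hq

end Preordering

theorem eval_nonneg_of_eval_mul_nonneg {a b : ℝ} (hab : a < b) {w r : ℝ[X]} (hw0 : w ≠ 0)
    (hw : ∀ x ∈ Set.Icc a b, 0 ≤ w.eval x) (hwr : ∀ x ∈ Set.Icc a b, 0 ≤ (w * r).eval x) :
    ∀ x ∈ Set.Icc a b, 0 ≤ r.eval x := by
  have hroots : Dense {x | w.IsRoot x}ᶜ := (finite_setOfPred_isRoot hw0).countable.dense_compl ℝ
  have hdense : Set.Icc a b ⊆ closure (Set.Ioo a b ∩ {x | w.IsRoot x}ᶜ) := by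
    rw [← closure_Ioo hab.ne]
    exact closure_minimal (hroots.open_subset_closure_inter isOpen_Ioo) isClosed_closure
  have hclosed : IsClosed {x | 0 ≤ r.eval x} := isClosed_le continuous_const r.continuous
  refine fun x hx => closure_minimal (fun y hy => ?_) hclosed (hdense hx)
  have hy' := Set.Ioo_subset_Icc_self hy.1
  have hpos : 0 < w.eval y := (hw y hy').lt_of_ne' hy.2
  exact nonneg_of_mul_nonneg_right (by simpa only [eval_mul] using hwr y hy') hpos

theorem X_sub_C_sq_dvd_of_isLocalMin {q : ℝ[X]} {a : ℝ} (hroot : q.IsRoot a)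
    (hmin : IsLocalMin (fun x => q.eval x) a) : (X - C a) ^ 2 ∣ q := by
  rcases eq_or_ne q 0 with rfl | hq
  · exact dvd_zero _
  · have hderiv : (derivative q).IsRoot a := hmin.hasDerivAt_eq_zero (q.hasDerivAt a)
    exact (le_rootMultiplicity_iff hq).1
      ((one_lt_rootMultiplicity_iff_isRoot hq).2 ⟨hroot, hderiv⟩)

/-- A zero at an endpoint splits off a linear factor; one in the interior is a double zero. -/
theorem exists_truncatedPreordering_dvd_of_isRoot {a b c : ℝ} {q : ℝ[X]} (hc : c ∈ Set.Icc a b)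
    (hroot : q.IsRoot c) (hq : ∀ x ∈ Set.Icc a b, 0 ≤ q.eval x) :
    ∃ w ∈ truncatedPreordering a b w.natDegree, w.natDegree ≠ 0 ∧ w ∣ q := by
  rcases hc.1.eq_or_lt with rfl | hac
  · refine ⟨X - C a, ?_, by simp, dvd_iff_isRoot.2 hroot⟩
    simpa using X_sub_C_mem_truncatedPreordering
  rcases hc.2.eq_or_lt with rfl | hcb
  · have hneg : C c - X = -(X - C c) := (neg_sub _ _).symm
    refine ⟨C c - X, ?_, by simp [hneg, -neg_sub], ?_⟩
    · simpa [hneg, -neg_sub] using C_sub_X_mem_truncatedPreordering (a := a) (b := c)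
    · rw [hneg, neg_dvd]; exact dvd_iff_isRoot.2 hroot
  · have hmin : IsLocalMin (fun x => q.eval x) c :=
      Filter.eventually_of_mem (Icc_mem_nhds hac hcb) fun x hx => by
        simpa only [hroot.eq_zero] using hq x hx
    exact ⟨(X - C c) ^ 2, sq_mem_truncatedPreordering (by simp), by simp,
      X_sub_C_sq_dvd_of_isLocalMin hroot hmin⟩

/-- The Markov–Lukács theorem: subtracting the minimum creates a zero, and dividing by the factor
which that zero forces lowers the degree. -/
theorem mem_truncatedPreordering_of_nonneg {a b : ℝ} (hab : a < b) {n : ℕ} {q : ℝ[X]}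
    (hn : q.natDegree ≤ n) (hq : ∀ x ∈ Set.Icc a b, 0 ≤ q.eval x) :
    q ∈ truncatedPreordering a b n := by
  induction n using Nat.strong_induction_on generalizing q with
  | _ n ih =>
  obtain ⟨c, hc, hmin⟩ :=
    isCompact_Icc.exists_isMinOn (Set.nonempty_Icc.2 hab.le) q.continuous.continuousOn
  suffices h : q - C (q.eval c) ∈ truncatedPreordering a b n by
    simpa using add_mem h (C_mem_truncatedPreordering (hq c hc))
  have hnonneg : ∀ x ∈ Set.Icc a b, 0 ≤ (q - C (q.eval c)).eval x := fun x hx => by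
    simpa using hmin hx
  obtain ⟨w, hw, hwdeg, r, hr⟩ :=
    exists_truncatedPreordering_dvd_of_isRoot hc (by simp) hnonneg
  rcases eq_or_ne r 0 with rfl | hr0
  · simp only [hr, mul_zero, zero_mem]
  have hw0 : w ≠ 0 := ne_zero_of_natDegree_gt (Nat.pos_of_ne_zero hwdeg)
  have hdeg : w.natDegree + r.natDegree ≤ n := by
    rwa [← natDegree_mul hw0 hr0, ← hr, natDegree_sub_C]
  have hrmem : r ∈ truncatedPreordering a b (n - w.natDegree) :=
    ih _ (by omega) (by omega) <| eval_nonneg_of_eval_mul_nonneg hab hw0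
      (fun x => eval_nonneg_of_mem_truncatedPreordering hw) (hr ▸ hnonneg)
  simpa only [hr, Nat.add_sub_of_le (Nat.le_of_add_right_le hdeg)]
    using mul_mem_truncatedPreordering hw hrmem

/-- By parity, every weighted square reduces to one of weight `1`, `X - a`, `b - X` or
`(X - a) * (b - X)`; the linear weights follow from
`(b - a) (X - a) = (X - a) ^ 2 + (X - a) (b - X)` and its mirror image. -/
theorem nonneg_of_weighted_sq_nonneg {a b : ℝ} (hab : a < b) {d : ℕ} {L : ℝ[X] →ₗ[ℝ] ℝ}
    (hsq : ∀ g : ℝ[X], g.natDegree ≤ d → 0 ≤ L (g ^ 2))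
    (hloc : ∀ g : ℝ[X], g.natDegree < d → 0 ≤ L ((X - C a) * (C b - X) * g ^ 2))
    {i j : ℕ} {g : ℝ[X]} (hg : i + j + 2 * g.natDegree ≤ 2 * d) :
    0 ≤ L ((X - C a) ^ i * (C b - X) ^ j * g ^ 2) := by
  have hlin : ∀ {u h : ℝ[X]}, u.natDegree ≤ 1 → h.natDegree < d →
      C (b - a) * (u * h ^ 2) = (u * h) ^ 2 + (X - C a) * (C b - X) * h ^ 2 →
      0 ≤ L (u * h ^ 2) := fun {u h} hu hh heq => by
    have huh : (u * h).natDegree ≤ d := natDegree_mul_le.trans (by omega)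
    refine nonneg_of_mul_nonneg_right (a := b - a) ?_ (sub_pos.2 hab)
    rw [← smul_eq_mul, ← map_smul, smul_eq_C_mul, heq, map_add]
    exact add_nonneg (hsq _ huh) (hloc h hh)
  have hdeg : ∀ k l, ((X - C a) ^ k * (C b - X) ^ l * g).natDegree ≤ k + l + g.natDegree :=
    fun k l => by compute_degree
  obtain ⟨k, rfl | rfl⟩ := i.even_or_odd' <;> obtain ⟨l, rfl | rfl⟩ := j.even_or_odd'
  · convert hsq ((X - C a) ^ k * (C b - X) ^ l * g) ((hdeg k l).trans (by omega)) using 2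
    ring
  · convert hlin (u := C b - X) (h := (X - C a) ^ k * (C b - X) ^ l * g) (by compute_degree)
      ((hdeg k l).trans_lt (by omega)) (by rw [C_sub]; ring) using 2
    ring
  · convert hlin (u := X - C a) (h := (X - C a) ^ k * (C b - X) ^ l * g) (by compute_degree)
      ((hdeg k l).trans_lt (by omega)) (by rw [C_sub]; ring) using 2
    ring
  · convert hloc ((X - C a) ^ k * (C b - X) ^ l * g) ((hdeg k l).trans_lt (by omega)) using 2
    ring

theorem nonneg_of_mem_truncatedPreordering {a b : ℝ} (hab : a < b) {d : ℕ} {L : ℝ[X] →ₗ[ℝ] ℝ}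
    (hsq : ∀ g : ℝ[X], g.natDegree ≤ d → 0 ≤ L (g ^ 2))
    (hloc : ∀ g : ℝ[X], g.natDegree < d → 0 ≤ L ((X - C a) * (C b - X) * g ^ 2))
    {q : ℝ[X]} (hq : q ∈ truncatedPreordering a b (2 * d)) : 0 ≤ L q := by
  induction hq using AddSubmonoid.closure_induction with
  | mem q hq =>
    obtain ⟨i, j, g, hg, rfl⟩ := hq
    exact nonneg_of_weighted_sq_nonneg hab hsq hloc hg
  | zero => simp
  | add p q _ _ hp hq => rw [map_add]; exact add_nonneg hp hq

open CompactlySupported in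
theorem exists_finiteMeasure_integral_eq_of_nonneg {X W : Type*} [TopologicalSpace X] [T2Space X]
    [CompactSpace X] [MeasurableSpace X] [BorelSpace X] [AddCommGroup W] [Module ℝ W]
    (φ : W →ₗ[ℝ] C(X, ℝ)) (L : W →ₗ[ℝ] ℝ) (hone : 1 ∈ LinearMap.range φ)
    (hL : ∀ w, 0 ≤ φ w → 0 ≤ L w) :
    ∃ μ : FiniteMeasure X, ∀ w, ∫ x, φ w x ∂(μ : Measure X) = L w := by
  have hker : ∀ w ∈ LinearMap.ker φ, L w = 0 := fun w hw => by
    rw [LinearMap.mem_ker] at hw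
    exact le_antisymm (by simpa using hL (-w) (by simp [hw])) (hL w hw.ge)
  obtain ⟨L', rfl⟩ : L ∈ LinearMap.range φ.dualMap := by
    rw [LinearMap.range_dualMap_eq_dualAnnihilator_ker]
    exact (Submodule.mem_dualAnnihilator L).2 hker
  obtain ⟨e, he⟩ := hone
  obtain ⟨Λ, hΛL, hΛ⟩ := riesz_extension (PointedCone.positive ℝ C(X, ℝ))
    (L'.toPMap (LinearMap.range φ))
    (by rintro ⟨_, w, rfl⟩ hw; exact hL w hw)
    fun f => by
      refine ⟨⟨‖f‖ • 1, ‖f‖ • e, by rw [map_smul, he]⟩, fun x => ?_⟩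
      simpa using neg_le_iff_add_nonneg'.1 (f.neg_norm_le_apply x)
  let ΛC : C_c(X, ℝ) →ₚ[ℝ] ℝ := PositiveLinearMap.mk₀
    { toFun := fun f => Λ f.toContinuousMap
      map_add' := fun f g => map_add Λ f.toContinuousMap g.toContinuousMap
      map_smul' := fun c f => map_smul Λ c f.toContinuousMap } fun f hf => hΛ _ hf
  refine ⟨⟨RealRMK.rieszMeasure ΛC, inferInstance⟩, fun w => ?_⟩
  calc ∫ x, φ w x ∂(RealRMK.rieszMeasure ΛC)
      = Λ (φ w) := RealRMK.integral_rieszMeasure ΛC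
          (CompactlySupportedContinuousMap.continuousMapEquiv (φ w))
    _ = L' (φ w) := hΛL ⟨φ w, w, rfl⟩

theorem exists_finiteMeasure_compact_integral_eval_eq {K : Set ℝ} (hK : IsCompact K) {n : ℕ}
    {L : ℝ[X] →ₗ[ℝ] ℝ}
    (hL : ∀ q : ℝ[X], q.natDegree ≤ n → (∀ x ∈ K, 0 ≤ q.eval x) → 0 ≤ L q) :
    ∃ ρ : FiniteMeasure ℝ, (ρ : Measure ℝ) Kᶜ = 0 ∧
      ∀ q : ℝ[X], q.natDegree ≤ n → ∫ x, q.eval x ∂(ρ : Measure ℝ) = L q := by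
  have := isCompact_iff_compactSpace.1 hK
  have hdeg : ∀ {q : ℝ[X]}, q ∈ degreeLE ℝ n ↔ q.natDegree ≤ n :=
    mem_degreeLE.trans natDegree_le_iff_degree_le.symm
  obtain ⟨μ, hμ⟩ := exists_finiteMeasure_integral_eq_of_nonneg
    ((toContinuousMapOnAlgHom K).toLinearMap ∘ₗ (degreeLE ℝ n).subtype)
    (L ∘ₗ (degreeLE ℝ n).subtype) ⟨⟨1, hdeg.2 (by simp)⟩, map_one (toContinuousMapOnAlgHom K)⟩
    fun q hq => hL q (hdeg.1 q.2) fun x hx => hq ⟨x, hx⟩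
  refine ⟨μ.map Subtype.val, ?_, fun q hq => ?_⟩
  · rw [FiniteMeasure.toMeasure_map,
      Measure.map_apply measurable_subtype_coe hK.measurableSet.compl]
    simp
  · rw [FiniteMeasure.toMeasure_map,
      (MeasurableEmbedding.subtype_coe hK.measurableSet).integral_map]
    exact hμ ⟨q, hdeg.2 hq⟩

theorem exists_finiteMeasure_Icc_integral_eval_eq {a b : ℝ} (hab : a < b) {d : ℕ}
    {L : ℝ[X] →ₗ[ℝ] ℝ} (hsq : ∀ g : ℝ[X], g.natDegree ≤ d → 0 ≤ L (g ^ 2))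
    (hloc : ∀ g : ℝ[X], g.natDegree < d → 0 ≤ L ((X - C a) * (C b - X) * g ^ 2)) :
    ∃ ρ : FiniteMeasure ℝ, (ρ : Measure ℝ) (Set.Icc a b)ᶜ = 0 ∧
      ∀ q : ℝ[X], q.natDegree ≤ 2 * d → ∫ x, q.eval x ∂(ρ : Measure ℝ) = L q :=
  exists_finiteMeasure_compact_integral_eval_eq isCompact_Icc fun _ hdeg hq =>
    nonneg_of_mem_truncatedPreordering hab hsq hloc
      (mem_truncatedPreordering_of_nonneg hab hdeg hq)

/-- The Riesz functional of a sequence `σ`: the linear functional on polynomials that takes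
`X ^ n` to `σ n`, as integration against a measure with moments `σ` would. -/
noncomputable def rieszFunctional {R : Type*} [CommSemiring R] (σ : ℕ → R) : R[X] →ₗ[R] R :=
  (basisMonomials R).constr R σ

@[simp]
theorem rieszFunctional_X_pow {R : Type*} [CommSemiring R] (σ : ℕ → R) (n : ℕ) :
    rieszFunctional σ (X ^ n) = σ n := by
  rw [rieszFunctional, ← monomial_one_right_eq_X_pow]
  exact (basisMonomials R).constr_basis R σ n

theorem dotProduct_mulVec_eq_apply_sq (M : ℝ[X] →ₗ[ℝ] ℝ) {N : ℕ} (v : Fin N → ℝ) :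
    star v ⬝ᵥ (Matrix.of fun m n : Fin N => M (X ^ (m.1 + n.1))).mulVec v =
      M ((∑ m, monomial m.1 (v m)) ^ 2) := by
  have hmonomial : ∀ n (c : ℝ), M (monomial n c) = c * M (X ^ n) := fun n c => by
    rw [← smul_X_eq_monomial, map_smul, smul_eq_mul]
  rw [sq, Finset.sum_mul_sum]
  simp only [monomial_mul_monomial, map_sum, hmonomial, dotProduct, Matrix.mulVec,
    Matrix.of_apply, Finset.mul_sum, star_trivial]
  exact Finset.sum_congr rfl fun m _ => Finset.sum_congr rfl fun n _ => by ring

theorem posSemidef_of_apply_X_pow_iff (M : ℝ[X] →ₗ[ℝ] ℝ) (N : ℕ) :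
    (Matrix.of fun m n : Fin N => M (X ^ (m.1 + n.1))).PosSemidef ↔
      ∀ g ∈ degreeLT ℝ N, 0 ≤ M (g ^ 2) := by
  refine ⟨fun h g hg => ?_, fun h => .of_dotProduct_mulVec_nonneg ?_ fun v => ?_⟩
  · have hsum : ∑ m : Fin N, monomial m.1 (g.coeff m) = g :=
      congrArg Subtype.val ((degreeLTEquiv ℝ N).symm_apply_apply ⟨g, hg⟩)
    rw [← hsum, ← dotProduct_mulVec_eq_apply_sq M fun m => g.coeff m]
    exact h.dotProduct_mulVec_nonneg _
  · ext m n
    simp [add_comm]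
  · rw [dotProduct_mulVec_eq_apply_sq]
    exact h _ (((degreeLTEquiv ℝ N).symm v).2)

theorem momentMatrix_posSemidef_iff {d : ℕ} {σ : ℕ → ℝ} :
    (momentMatrix d σ).PosSemidef ↔
      ∀ g ∈ degreeLT ℝ (d + 1), 0 ≤ rieszFunctional σ (g ^ 2) := by
  rw [← posSemidef_of_apply_X_pow_iff]
  simp only [rieszFunctional_X_pow]
  rfl

theorem locMomentMatrix_posSemidef_iff {d : ℕ} {σ : ℕ → ℝ} :
    (locMomentMatrix d σ).PosSemidef ↔
      ∀ g ∈ degreeLT ℝ d, 0 ≤ rieszFunctional σ ((1 - X ^ 2) * g ^ 2) := by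
  have hentry : ∀ k, rieszFunctional σ ((1 - X ^ 2) * X ^ k) = σ k - σ (k + 2) := fun k => by
    rw [sub_mul, one_mul, ← pow_add, map_sub, rieszFunctional_X_pow, rieszFunctional_X_pow,
      add_comm 2]
  have h := posSemidef_of_apply_X_pow_iff
    (rieszFunctional σ ∘ₗ LinearMap.mulLeft ℝ (1 - X ^ 2)) d
  simp only [LinearMap.comp_apply, LinearMap.mulLeft_apply, hentry] at h
  exact h

theorem exists_moments_eq_of_posSemidef {d : ℕ} {σ : ℕ → ℝ}
    (hσ : (momentMatrix d σ).PosSemidef) (hσ' : (locMomentMatrix d σ).PosSemidef) :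
    ∃ ρ : FiniteMeasure ℝ, (ρ : Measure ℝ) (Set.Icc (-1) 1)ᶜ = 0 ∧
      ∀ k ≤ 2 * d, ∫ x, x ^ k ∂(ρ : Measure ℝ) = σ k := by
  have hdeg : ∀ {g : ℝ[X]} {N : ℕ}, g.natDegree < N → g ∈ degreeLT ℝ N := fun h =>
    mem_degreeLT.2 (degree_le_natDegree.trans_lt (Nat.cast_lt.2 h))
  have hweight : (X - C (-1)) * (C 1 - X) = (1 - X ^ 2 : ℝ[X]) := by
    rw [C_neg, C_1]; ring
  obtain ⟨ρ, hρ, hint⟩ := exists_finiteMeasure_Icc_integral_eval_eq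
    (by norm_num : (-1 : ℝ) < 1) (d := d) (L := rieszFunctional σ)
    (fun g hg => momentMatrix_posSemidef_iff.1 hσ g (hdeg (Nat.lt_succ_of_le hg)))
    (fun g hg => hweight ▸ locMomentMatrix_posSemidef_iff.1 hσ' g (hdeg hg))
  refine ⟨ρ, hρ, fun k hk => ?_⟩
  simpa using hint (X ^ k) (by simpa using hk)

theorem integrable_of_continuous_of_measure_compl_eq_zero {X E : Type*} [TopologicalSpace X]
    [T2Space X] [MeasurableSpace X] [OpensMeasurableSpace X] [NormedAddCommGroup E]
    {μ : Measure X} [IsFiniteMeasureOnCompacts μ] {K : Set X} (hK : IsCompact K)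
    (hμ : μ Kᶜ = 0) {f : X → E} (hf : Continuous f) : Integrable f μ := by
  rw [← Measure.restrict_eq_self_of_ae_mem (mem_ae_iff.2 hμ)]
  exact hf.continuousOn.integrableOn_compact hK

theorem rieszFunctional_moments {μ : Measure ℝ} (hμ : ∀ k : ℕ, Integrable (fun x => x ^ k) μ)
    (q : ℝ[X]) : rieszFunctional (fun k => ∫ x, x ^ k ∂μ) q = ∫ x, q.eval x ∂μ := by
  simp only [eval_eq_sum_range]
  rw [integral_finsetSum _ fun k _ => (hμ k).const_mul _]
  conv_lhs => rw [q.as_sum_range_C_mul_X_pow]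
  simp only [map_sum, ← smul_eq_C_mul, map_smul, rieszFunctional_X_pow, smul_eq_mul,
    integral_const_mul]

theorem momentMatrix_moments_posSemidef {μ : Measure ℝ}
    (hμ : ∀ k : ℕ, Integrable (fun x => x ^ k) μ) (d : ℕ) :
    (momentMatrix d fun k => ∫ x, x ^ k ∂μ).PosSemidef := by
  refine momentMatrix_posSemidef_iff.2 fun g _ => ?_
  rw [rieszFunctional_moments hμ]
  exact integral_nonneg fun x => by simpa using sq_nonneg (g.eval x)

theorem locMomentMatrix_moments_posSemidef {μ : Measure ℝ} [IsFiniteMeasure μ]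
    (hμ : μ (Set.Icc (-1) 1)ᶜ = 0) (d : ℕ) :
    (locMomentMatrix d fun k => ∫ x, x ^ k ∂μ).PosSemidef := by
  refine locMomentMatrix_posSemidef_iff.2 fun g _ => ?_
  rw [rieszFunctional_moments fun k =>
    integrable_of_continuous_of_measure_compl_eq_zero isCompact_Icc hμ (by fun_prop)]
  refine integral_nonneg_of_ae ?_
  filter_upwards [mem_ae_iff.2 hμ] with x hx
  simp only [eval_mul, eval_sub, eval_one, eval_pow, eval_X]
  have hweight : 0 ≤ 1 - x ^ 2 := sub_nonneg.2 ((sq_le_one_iff_abs_le_one x).2 (abs_le.2 hx))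
  positivity

theorem momentMatrix_congr {d : ℕ} {σ τ : ℕ → ℝ} (h : ∀ k ≤ 2 * d, σ k = τ k) :
    momentMatrix d σ = momentMatrix d τ := by
  ext m n
  exact h _ (by omega)

theorem locMomentMatrix_congr {d : ℕ} {σ τ : ℕ → ℝ} (h : ∀ k ≤ 2 * d, σ k = τ k) :
    locMomentMatrix d σ = locMomentMatrix d τ := by
  ext m n
  exact congrArg₂ (· - ·) (h _ (by omega)) (h _ (by omega))

theorem sum_pi_apply_cube {D L : ℕ} {ν : Fin L → Fin D → FiniteMeasure ℝ}
    (hν : ∀ l i, (ν l i : Measure ℝ) (Set.Icc (-1) 1)ᶜ = 0) :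
    (∑ l, Measure.pi fun i => (ν l i : Measure ℝ)) (cube D) =
      ENNReal.ofReal (∑ l, ∏ i, ∫ x, x ^ 0 ∂(ν l i : Measure ℝ)) := by
  have hmass : ∀ l i, (ν l i : Measure ℝ) (Set.Icc (-1) 1) =
      ENNReal.ofReal (∫ x, x ^ 0 ∂(ν l i : Measure ℝ)) := fun l i => by
    simp [measure_of_measure_compl_eq_zero (hν l i)]
  have hnonneg : ∀ l i, 0 ≤ ∫ x, x ^ 0 ∂(ν l i : Measure ℝ) := fun l i => by simp
  rw [ENNReal.ofReal_sum_of_nonneg fun l _ => Finset.prod_nonneg fun i _ => hnonneg l i]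
  simp only [cube, Measure.finsetSum_apply, Measure.pi_pi, hmass,
    ENNReal.ofReal_prod_of_nonneg fun i _ => hnonneg _ i]

theorem feasible_iff_exists_moments {D d L : ℕ} {σ : Fin L → Fin D → ℕ → ℝ} :
    Feasible D d L σ ↔ ∃ ρ : Fin L → Fin D → FiniteMeasure ℝ,
      (∀ l i, (ρ l i : Measure ℝ) (Set.Icc (-1) 1)ᶜ = 0) ∧
      (∑ l, Measure.pi fun i => (ρ l i : Measure ℝ)) (cube D) = 1 ∧
      ∀ l i, ∀ k ≤ 2 * d, ∫ x, x ^ k ∂(ρ l i : Measure ℝ) = σ l i k := by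
  constructor
  · rintro ⟨hσ, hσ', hone⟩
    choose ρ hρ hmom using fun l i => exists_moments_eq_of_posSemidef (hσ l i) (hσ' l i)
    refine ⟨ρ, hρ, ?_, hmom⟩
    simp only [sum_pi_apply_cube hρ, hmom _ _ 0 (Nat.zero_le _), hone, ENNReal.ofReal_one]
  · rintro ⟨ρ, hρ, hone, hmom⟩
    rw [sum_pi_apply_cube hρ, ENNReal.ofReal_eq_one] at hone
    refine ⟨fun l i => ?_, fun l i => ?_, ?_⟩
    · rw [← momentMatrix_congr (hmom l i)]
      exact momentMatrix_moments_posSemidef (fun k =>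
        integrable_of_continuous_of_measure_compl_eq_zero isCompact_Icc (hρ l i) (by fun_prop)) d
    · rw [← locMomentMatrix_congr (hmom l i)]
      exact locMomentMatrix_moments_posSemidef (hρ l i) d
    · simpa only [hmom _ _ 0 (Nat.zero_le _)] using hone

theorem integrable_eval_pi {ι : Type*} [Fintype ι] {μ : ι → Measure ℝ} [∀ i, SigmaFinite (μ i)]
    (hμ : ∀ i, ∀ k : ℕ, Integrable (fun x => x ^ k) (μ i)) (p : MvPolynomial ι ℝ) :
    Integrable (fun x => MvPolynomial.eval x p) (Measure.pi μ) := by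
  simp only [MvPolynomial.eval_eq']
  exact integrable_finsetSum _ fun n _ =>
    (Integrable.fintype_prod_dep fun i => hμ i (n i)).const_mul _

theorem integral_eval_pi {ι : Type*} [Fintype ι] {μ : ι → Measure ℝ} [∀ i, SigmaFinite (μ i)]
    (hμ : ∀ i, ∀ k : ℕ, Integrable (fun x => x ^ k) (μ i)) (p : MvPolynomial ι ℝ) :
    ∫ x, MvPolynomial.eval x p ∂(Measure.pi μ) =
      ∑ n ∈ p.support, p.coeff n * ∏ i, ∫ x, x ^ n i ∂(μ i) := by
  simp only [MvPolynomial.eval_eq']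
  rw [integral_finsetSum _ fun n _ =>
    (Integrable.fintype_prod_dep fun i => hμ i (n i)).const_mul _]
  refine Finset.sum_congr rfl fun n _ => ?_
  rw [integral_const_mul, integral_fintype_prod_eq_prod fun i (y : ℝ) => y ^ n i]

theorem integral_eval_sum_pi_eq_objective {D L : ℕ} {μ : Fin L → Fin D → Measure ℝ}
    [∀ l i, SigmaFinite (μ l i)] (hμ : ∀ l i, ∀ k : ℕ, Integrable (fun x => x ^ k) (μ l i))
    (p : MvPolynomial (Fin D) ℝ) :
    ∫ x, MvPolynomial.eval x p ∂(∑ l, Measure.pi (μ l)) =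
      objective D L p fun l i k => ∫ x, x ^ k ∂(μ l i) := by
  rw [integral_finsetSum_measure fun l _ => integrable_eval_pi (hμ l) p]
  simp only [integral_eval_pi (hμ _), objective, Finset.mul_sum]
  exact Finset.sum_comm

theorem objective_congr {D L n : ℕ} {p : MvPolynomial (Fin D) ℝ} (hp : ∀ i, p.degreeOf i ≤ n)
    {σ τ : Fin L → Fin D → ℕ → ℝ} (h : ∀ l i, ∀ k ≤ n, σ l i k = τ l i k) :
    objective D L p σ = objective D L p τ := by
  refine Finset.sum_congr rfl fun m hm => congrArg _ ?_
  exact Finset.sum_congr rfl fun l _ => Finset.prod_congr rfl fun i _ =>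
    h l i _ ((MvPolynomial.monomial_le_degreeOf i hm).trans (hp i))

theorem statement7_general {D d L : ℕ} {p : MvPolynomial (Fin D) ℝ}
    (hdeg : ∀ i, p.degreeOf i ≤ 2 * d) {ν : Fin L → Fin D → FiniteMeasure ℝ}
    (hsupp : ∀ l i, (ν l i : Measure ℝ) (Set.Icc (-1 : ℝ) 1)ᶜ = 0)
    (hmass : (∑ l, Measure.pi fun i => (ν l i : Measure ℝ)) (cube D) = 1) :
    (∀ ρ : Fin L → Fin D → FiniteMeasure ℝ,
        (∀ l i, (ρ l i : Measure ℝ) (Set.Icc (-1 : ℝ) 1)ᶜ = 0) →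
        (∑ l, Measure.pi fun i => (ρ l i : Measure ℝ)) (cube D) = 1 →
        ∫ x, MvPolynomial.eval x p ∂(∑ l, Measure.pi fun i => (ν l i : Measure ℝ)) ≤
          ∫ x, MvPolynomial.eval x p ∂(∑ l, Measure.pi fun i => (ρ l i : Measure ℝ))) ↔
    (Feasible D d L (fun l i k => ∫ x, x ^ k ∂(ν l i : Measure ℝ)) ∧
      ∀ σ : Fin L → Fin D → ℕ → ℝ, Feasible D d L σ →
        objective D L p (fun l i k => ∫ x, x ^ k ∂(ν l i : Measure ℝ)) ≤
          objective D L p σ) := by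
  have hobj : ∀ ρ : Fin L → Fin D → FiniteMeasure ℝ,
      (∀ l i, (ρ l i : Measure ℝ) (Set.Icc (-1 : ℝ) 1)ᶜ = 0) →
      ∫ x, MvPolynomial.eval x p ∂(∑ l, Measure.pi fun i => (ρ l i : Measure ℝ)) =
        objective D L p fun l i k => ∫ x, x ^ k ∂(ρ l i : Measure ℝ) := fun ρ hρ =>
    integral_eval_sum_pi_eq_objective (fun l i k =>
      integrable_of_continuous_of_measure_compl_eq_zero isCompact_Icc (hρ l i) (by fun_prop)) p
  constructor
  · intro hmin
    refine ⟨feasible_iff_exists_moments.2 ⟨ν, hsupp, hmass, fun _ _ _ _ => rfl⟩, fun σ hσ => ?_⟩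
    obtain ⟨ρ, hρ, hρmass, hmom⟩ := feasible_iff_exists_moments.1 hσ
    rw [← objective_congr hdeg hmom, ← hobj ν hsupp, ← hobj ρ hρ]
    exact hmin ρ hρ hρmass
  · rintro ⟨-, hmin⟩ ρ hρ hρmass
    rw [hobj ν hsupp, hobj ρ hρ]
    exact hmin _ (feasible_iff_exists_moments.2 ⟨ρ, hρ, hρmass, fun _ _ _ _ => rfl⟩)

/-- Corollary A.8, point 2: `ν = Σ_l ν_1^{(l)} ⊗ ⋯ ⊗ ν_D^{(l)} ∈ S_L` attains the
infimum of `∫ p dρ` over `ρ ∈ S_L` if and only if its tuple of moments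
`μ_{i,k}^{(l)} = ∫ x^k dν_i^{(l)}` attains the infimum of the objective `f` over the
feasible set `F_L`. -/
theorem statement7 (D d L : ℕ) (hD : 1 ≤ D) (hd : 1 ≤ d) (hL : 1 ≤ L)
    (p : MvPolynomial (Fin D) ℝ) (hdeg : p.totalDegree ≤ d)
    (ν : Fin L → Fin D → FiniteMeasure ℝ)
    (hsupp : ∀ l i, (ν l i : Measure ℝ) (Set.Icc (-1 : ℝ) 1)ᶜ = 0)
    (hmass : (∑ l, Measure.pi fun i => (ν l i : Measure ℝ)) (cube D) = 1) :
    (∀ ρ : Fin L → Fin D → FiniteMeasure ℝ,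
        (∀ l i, (ρ l i : Measure ℝ) (Set.Icc (-1 : ℝ) 1)ᶜ = 0) →
        (∑ l, Measure.pi fun i => (ρ l i : Measure ℝ)) (cube D) = 1 →
        ∫ x, MvPolynomial.eval x p ∂(∑ l, Measure.pi fun i => (ν l i : Measure ℝ)) ≤
          ∫ x, MvPolynomial.eval x p ∂(∑ l, Measure.pi fun i => (ρ l i : Measure ℝ))) ↔
    (Feasible D d L (fun l i k => ∫ x, x ^ k ∂(ν l i : Measure ℝ)) ∧
      ∀ σ : Fin L → Fin D → ℕ → ℝ, Feasible D d L σ →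
        objective D L p (fun l i k => ∫ x, x ^ k ∂(ν l i : Measure ℝ)) ≤
          objective D L p σ) :=
  statement7_general
    (fun i => (p.degreeOf_le_totalDegree i).trans (hdeg.trans (Nat.le_mul_of_pos_left d two_pos)))
    hsupp hmass
end
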